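/- arXiv:1809.00280 — 3 statements merged into one kernel-verified Lean document; each statement's English description precedes it below -/
import Mathlib

section
/- Suppose the base of an admissible word W of an S-machine S is Q_i Q_i^{-1} (respectively Q_i^{-1} Q_i), and consider a reduced computation starting with W ≡ q_i u q_i^{-1} (respectively q_i^{-1} u q_i), where u ≠ 1, and ending with W' ≡ q_i' u' (q_i')^{-1} (respectively W' ≡ (q_i')^{-1} u' q_i'). Suppose each rule θ of the computation has a part q_i → a_θ q_i' b_θ where b_θ (respectively a_θ) is a letter, and for different rules θ the letters b_θ (respectively a_θ) are different. Then the history of the computation has the form H_1 H_2^k H_3 where k ≥ 0, ||H_2|| ≤ min(||u||, ||u'||), ||H_1|| ≤ ||u||/2, and ||H_3|| ≤ ||u'||/2. -/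
/-!
Let `g = p w p⁻¹` with `w` cyclically reduced. In the Cayley tree, `‖h⁻¹ g h‖` is the displacement
of the vertex `h` under `g`, that is, `‖w‖` plus twice the distance from `h` to the axis of `g`. The
prefixes of a reduced word `L` trace a geodesic, which first approaches the axis along a prefix of
`p`, then follows the axis, where it reads a word of period `‖w‖`, and finally leaves it for good.
A word of period `m` is a power of a word of length at most `m`, up to a remainder shorter than `m`,
which can be split evenly between the two ends.
-/

namespace SectorConjugation

open FreeGroup

section Period

variable {α β : Type*} {M z : List α} {m : ℕ}

theorem hasPeriod_length_of_prefix_append (h : M <+: z ++ M) : M.HasPeriod z.length := by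
  have hdrop : M.drop z.length <+: M := by simpa using h.drop z.length
  rw [List.HasPeriod]
  conv_lhs => rw [← List.take_append_drop z.length M]
  exact (List.prefix_append_right_inj _).2 hdrop

theorem prefix_flatten_replicate_append (h : M <+: z ++ M) (k : ℕ) :
    M <+: (List.replicate k z).flatten ++ M := by
  induction k with
  | zero => simp
  | succ k ih =>
    rw [List.replicate_succ, List.flatten_cons, List.append_assoc]
    exact h.trans ((List.prefix_append_right_inj z).2 ih)

theorem hasPeriod_of_map {f : α → β} (hf : f.Injective) (h : (M.map f).HasPeriod m) :
    M.HasPeriod m := by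
  rwa [List.HasPeriod, ← List.map_take, ← List.map_append,
    List.prefix_map_iff_of_injective hf] at h

theorem exists_eq_append_flatten_replicate_append (hm : 0 < m) (h : M.HasPeriod m) :
    ∃ (A B C : List α) (k : ℕ), M = A ++ (List.replicate k B).flatten ++ C ∧
      B.length ≤ m ∧ 2 * A.length ≤ m ∧ 2 * C.length ≤ m := by
  set r := M.length % m
  set k := M.length / m
  have hr : r < m := Nat.mod_lt _ hm
  have hlen : m * k + r = M.length := Nat.div_add_mod _ _
  set N := M.drop (r / 2) with hN
  have hNlen : N.length = m * k + (r - r / 2) := by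
    rw [hN, List.length_drop]
    omega
  have hpow : ((List.replicate k (N.take m)).flatten).length = m * k := by
    rcases Nat.eq_zero_or_pos k with hk | hk
    · simp [hk]
    · have : m ≤ N.length := hNlen ▸ (Nat.le_mul_of_pos_right m hk).trans (Nat.le_add_right _ _)
      simp [this, mul_comm]
  have hNper : N.HasPeriod m := h.infix (M.drop_suffix _).isInfix
  obtain ⟨C, hC⟩ : (List.replicate k (N.take m)).flatten <+: N :=
    List.prefix_of_prefix_length_le (List.prefix_append _ _)
      (prefix_flatten_replicate_append hNper k) (by omega)
  refine ⟨M.take (r / 2), N.take m, C, k, ?_, List.length_take_le _ _, ?_, ?_⟩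
  · rw [List.append_assoc, hC, List.take_append_drop]
  · have := List.length_take_le (r / 2) M
    omega
  · have := congrArg List.length hC
    rw [List.length_append] at this
    omega

end Period

section Reduced

variable {α : Type*} {L w u v : List (α × Bool)}

theorem isReduced_invRev (h : IsReduced w) : IsReduced (invRev w) := by
  classical
  exact .of_reduce_eq (by rw [reduce_invRev, h.reduce_eq])

theorem isReduced_invRev_append (hL : IsReduced L) (hw : IsReduced w)
    (h : ∀ x ∈ L.head?, x ∉ w.head?) : IsReduced (invRev L ++ w) := by
  refine List.isChain_append.2 ⟨isReduced_invRev hL, hw, fun a ha b hb hab => ?_⟩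
  obtain ⟨x, hx, rfl⟩ : ∃ x ∈ L.head?, (x.1, !x.2) = a := by
    simpa [invRev, List.getLast?_reverse] using ha
  by_contra hne
  have hxb : x = b := Prod.ext hab (by simpa using hne)
  exact h x hx (hxb ▸ hb)

theorem isCyclicallyReduced_iff_isReduced_append_self :
    IsCyclicallyReduced w ↔ IsReduced (w ++ w) := by
  simp only [isCyclicallyReduced_iff, FreeGroup.IsReduced, List.isChain_append, and_self_left]

theorem isCyclicallyReduced_append_comm (h : IsCyclicallyReduced (u ++ v)) :
    IsCyclicallyReduced (v ++ u) :=
  isCyclicallyReduced_iff_isReduced_append_self.2 <|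
    (h.flatten_replicate 3).isReduced.infix ⟨u, v, by simp [List.replicate_succ]⟩

theorem isCyclicallyReduced_invRev (h : IsCyclicallyReduced w) :
    IsCyclicallyReduced (invRev w) := by
  rw [isCyclicallyReduced_iff_isReduced_append_self] at h ⊢
  simpa only [invRev_append] using isReduced_invRev h

theorem isReduced_append_or_isReduced_invRev_append (hw : IsCyclicallyReduced w)
    (hL : IsReduced L) : IsReduced (w ++ L) ∨ IsReduced (invRev w ++ L) := by
  by_cases h : ∀ x ∈ w.head?, x ∉ L.head?
  · exact .inr (isReduced_invRev_append hw.isReduced hL h)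
  · push Not at h
    obtain ⟨x, hxw, hxL⟩ := h
    refine .inl (List.isChain_append.2 ⟨hw.isReduced, hL, fun a ha b hb => ?_⟩)
    exact hw.2 a ha b (Option.mem_unique hxL hb ▸ hxw)

end Reduced

section Conjugation

variable {α : Type*} [DecidableEq α] {L p w : List (α × Bool)}

theorem norm_conj_mk_of_isReduced (hne : w ≠ []) (hLw : IsReduced (invRev L ++ w))
    (hwL : IsReduced (w ++ L)) :
    norm ((mk L)⁻¹ * mk w * mk L) = w.length + 2 * L.length := by
  rw [inv_mk, mul_mk, mul_mk, FreeGroup.norm, toWord_mk, (hLw.append_overlap hwL hne).reduce_eq]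
  simp only [List.length_append, invRev_length]
  ring

theorem exists_prefix_append_norm_conj_mk (hne : w ≠ []) (hw : IsCyclicallyReduced w)
    (hwL : IsReduced (w ++ L)) :
    ∃ M E, L = M ++ E ∧ M <+: w ++ M ∧
      norm ((mk L)⁻¹ * mk w * mk L) = w.length + 2 * E.length := by
  induction L generalizing w with
  | nil =>
    exact ⟨[], [], rfl, List.nil_prefix, norm_conj_mk_of_isReduced hne hw.isReduced hwL⟩
  | cons x L ih =>
    by_cases hx : x ∈ w.head?
    · obtain ⟨v, rfl⟩ := List.head?_eq_some_iff.1 hx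
      have hrot : (mk (x :: L))⁻¹ * mk (x :: v) * mk (x :: L) =
          (mk L)⁻¹ * mk (v ++ [x]) * mk L := by
        rw [← List.singleton_append (l := L), ← List.singleton_append (l := v)]
        simp only [← mul_mk]
        group
      obtain ⟨M, E, rfl, hM, hnorm⟩ := ih (w := v ++ [x]) (by simp)
        (isCyclicallyReduced_append_comm (u := [x]) hw) (hwL.infix ⟨[x], [], by simp⟩)
      refine ⟨x :: M, E, rfl, by simpa using hM, ?_⟩
      rw [hrot, hnorm, List.length_append, List.length_singleton, List.length_cons]
    · have hLw : IsReduced (invRev (x :: L) ++ w) :=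
        isReduced_invRev_append (hwL.infix (List.suffix_append w _).isInfix) hw.isReduced
          (by simpa using hx)
      exact ⟨[], x :: L, rfl, List.nil_prefix, norm_conj_mk_of_isReduced hne hLw hwL⟩

theorem exists_hasPeriod_norm_conj_mk (hne : w ≠ []) (hw : IsCyclicallyReduced w)
    (hL : IsReduced L) :
    ∃ M E, L = M ++ E ∧ M.HasPeriod w.length ∧
      norm ((mk L)⁻¹ * mk w * mk L) = w.length + 2 * E.length := by
  -- `L` may follow the axis of `w` backwards, which is following the axis of `w⁻¹` forwards.
  rcases isReduced_append_or_isReduced_invRev_append hw hL with hwL | hwL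
  · obtain ⟨M, E, hME, hM, hnorm⟩ := exists_prefix_append_norm_conj_mk hne hw hwL
    exact ⟨M, E, hME, hasPeriod_length_of_prefix_append hM, hnorm⟩
  · have hinv : (mk L)⁻¹ * mk (invRev w) * mk L = ((mk L)⁻¹ * mk w * mk L)⁻¹ := by
      rw [← inv_mk]
      group
    obtain ⟨M, E, hME, hM, hnorm⟩ := exists_prefix_append_norm_conj_mk
      (by simpa [← List.length_eq_zero_iff] using hne) (isCyclicallyReduced_invRev hw) hwL
    rw [hinv, norm_inv_eq, invRev_length] at hnorm
    exact ⟨M, E, hME, invRev_length (L₁ := w) ▸ hasPeriod_length_of_prefix_append hM, hnorm⟩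

theorem exists_hasPeriod_le_norm_conj_mk_append_invRev (hne : w ≠ [])
    (hw : IsCyclicallyReduced w) (hpw : IsReduced (p ++ w ++ invRev p)) (hL : IsReduced L) :
    ∃ D M E, L = D ++ M ++ E ∧ M.HasPeriod w.length ∧ D.length ≤ p.length ∧
      w.length + 2 * E.length ≤ norm ((mk L)⁻¹ * mk (p ++ w ++ invRev p) * mk L) := by
  induction p generalizing L with
  | nil =>
    obtain ⟨M, E, hME, hM, hnorm⟩ := exists_hasPeriod_norm_conj_mk hne hw hL
    exact ⟨[], M, E, hME, hM, le_rfl, by simpa using hnorm.ge⟩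
  | cons y p ih =>
    by_cases hy : y ∈ L.head?
    · obtain ⟨L, rfl⟩ := List.head?_eq_some_iff.1 hy
      have hcancel : (mk (y :: L))⁻¹ * mk (y :: p ++ w ++ invRev (y :: p)) * mk (y :: L) =
          (mk L)⁻¹ * mk (p ++ w ++ invRev p) * mk L := by
        rw [← List.singleton_append (l := L), ← List.singleton_append (l := p)]
        simp only [← mul_mk, ← inv_mk]
        group
      obtain ⟨D, M, E, rfl, hM, hD, hnorm⟩ :=
        ih (hpw.infix ⟨[y], invRev [y], by simp [invRev_cons (L := p)]⟩)
          (hL.infix (List.suffix_cons y L).isInfix)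
      exact ⟨y :: D, M, E, rfl, hM, by simpa using hD, by rwa [hcancel]⟩
    · set W := y :: p ++ w ++ invRev (y :: p) with hW
      have hLW : IsReduced (invRev L ++ W) :=
        isReduced_invRev_append hL hpw fun x hx hxW => hy (by simp_all)
      have hWL : IsReduced (W ++ L) := by
        have hhead : (invRev W).head? = some y := by
          rw [hW, invRev_append, invRev_invRev, List.cons_append, List.head?_cons]
        rw [← invRev_invRev (L₁ := W)]
        exact isReduced_invRev_append (isReduced_invRev hpw) hL (by simpa [hhead] using hy)
      refine ⟨[], [], L, rfl, List.hasPeriod_empty _, Nat.zero_le _, ?_⟩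
      rw [norm_conj_mk_of_isReduced (by simp [hW]) hLW hWL]
      simp only [hW, List.length_append]
      omega

theorem exists_hasPeriod_le_norm_conj {g : FreeGroup α} (hg : g ≠ 1) (hL : IsReduced L) :
    ∃ D M E m, L = D ++ M ++ E ∧ 0 < m ∧ M.HasPeriod m ∧ m + 2 * D.length ≤ norm g ∧
      m + 2 * E.length ≤ norm ((mk L)⁻¹ * g * mk L) := by
  set p := reduceCyclically.conjugator g.toWord
  set w := reduceCyclically g.toWord
  have hword : p ++ w ++ invRev p = g.toWord :=
    reduceCyclically.conj_conjugator_reduceCyclically _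
  have hne : w ≠ [] := by
    intro hnil
    apply hg
    rw [← mk_toWord (x := g), ← hword, hnil, List.append_nil, ← mul_mk, ← inv_mk,
      mul_inv_cancel]
  obtain ⟨D, M, E, hDME, hM, hD, hE⟩ := exists_hasPeriod_le_norm_conj_mk_append_invRev hne
    (reduceCyclically.isCyclicallyReduced isReduced_toWord) (hword ▸ isReduced_toWord) hL
  rw [hword, mk_toWord] at hE
  refine ⟨D, M, E, w.length, hDME, List.length_pos_of_ne_nil hne, hM, ?_, hE⟩
  have hlen := congrArg List.length hword
  simp only [List.length_append, invRev_length] at hlen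
  rw [FreeGroup.norm]
  omega

theorem exists_eq_append_pow_append_of_isReduced_map {R : Type*} {c : R → α × Bool}
    (hc : c.Injective) {g : FreeGroup α} (hg : g ≠ 1) {H : List R} (hH : IsReduced (H.map c)) :
    ∃ (H₁ H₂ H₃ : List R) (k : ℕ), H = H₁ ++ (List.replicate k H₂).flatten ++ H₃ ∧
      H₂.length ≤ min (norm g) (norm ((mk (H.map c))⁻¹ * g * mk (H.map c))) ∧
      2 * H₁.length ≤ norm g ∧
      2 * H₃.length ≤ norm ((mk (H.map c))⁻¹ * g * mk (H.map c)) := by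
  obtain ⟨_, _, _, m, hsplit, hm, hper, hD, hE⟩ := exists_hasPeriod_le_norm_conj hg hH
  obtain ⟨_, E, rfl, hDM, rfl⟩ := List.map_eq_append_iff.1 hsplit
  obtain ⟨D, M, rfl, rfl, rfl⟩ := List.map_eq_append_iff.1 hDM
  obtain ⟨A, B, C, k, rfl, hB, hA, hC⟩ :=
    exists_eq_append_flatten_replicate_append hm (hasPeriod_of_map hc hper)
  rw [List.length_map] at hD hE
  refine ⟨D ++ A, B, C ++ E, k, by simp only [List.append_assoc], ?_, ?_, ?_⟩
  · exact le_min (by omega) (by omega)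
  · rw [List.length_append]
    omega
  · rw [List.length_append]
    omega

end Conjugation

section Computation

theorem eq_conj_mk_ofFn {α : Type*} {t : ℕ} {x : Fin t → α × Bool} {u : Fin (t + 1) → FreeGroup α}
    (hstep : ∀ i : Fin t, u i.succ = (mk [x i])⁻¹ * u i.castSucc * mk [x i]) :
    u (Fin.last t) = (mk (List.ofFn x))⁻¹ * u 0 * mk (List.ofFn x) := by
  induction t with
  | zero => simp [← one_eq_mk]
  | succ t ih =>
    have hfirst : u 1 = (mk [x 0])⁻¹ * u 0 * mk [x 0] := by simpa using hstep 0
    rw [List.ofFn_succ, ← List.singleton_append, ← mul_mk, ← Fin.succ_last,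
      ih (u := fun i => u i.succ) fun i => hstep i.succ, Fin.succ_zero_eq_one, hfirst]
    group

variable {α R : Type*} {c : R → α × Bool} {inv : R → R}

theorem isReduced_map_of_isChain (hc : c.Injective)
    (hinv : ∀ r, c (inv r) = ((c r).1, !(c r).2)) {H : List R}
    (hH : H.IsChain fun r s => s ≠ inv r) : IsReduced (H.map c) := by
  refine (List.isChain_map c).2 (hH.imp fun r s hne hfst => ?_)
  by_contra hsnd
  refine hne (hc ?_)
  rw [hinv]
  exact Prod.ext hfst.symm (Bool.eq_not.2 (Ne.symm hsnd))

theorem injective_comp_inv (hc : c.Injective) (hinv : ∀ r, c (inv r) = ((c r).1, !(c r).2)) :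
    (c ∘ inv).Injective := by
  intro r s hrs
  apply hc
  simpa [hinv, Prod.ext_iff] using hrs

end Computation

end SectorConjugation

/-- Lemma `gen2`.  A computation with base `Q_i Q_i⁻¹` (resp. `Q_i⁻¹ Q_i`) is modelled by
the evolution of the tape word `u` of the sector between the two mutually inverse state
letters: each rule `θ` with part `q_i → a_θ q_i' b_θ` conjugates `u` by the letter `b_θ`
(resp. by `a_θ⁻¹`), so `u ↦ c_θ u c_θ⁻¹` (resp. `u ↦ c_θ⁻¹ u c_θ`) where the letter
`c_θ ∈ Y × Bool` is assigned injectively to the rules (different rules have different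
letters), rules come in mutually inverse pairs, and the computation is reduced.  The
conclusion is the decomposition `H ≡ H₁ H₂^k H₃` of the history with
`‖H₂‖ ≤ min(‖u‖, ‖u'‖)`, `‖H₁‖ ≤ ‖u‖/2` and `‖H₃‖ ≤ ‖u'‖/2`. -/
theorem sMachine_sector_conjugation
    {Y R : Type} [DecidableEq Y]
    (c : R → Y × Bool) (hinj : Function.Injective c)
    (inv : R → R) (hinv : ∀ r, c (inv r) = ((c r).1, !(c r).2))
    (t : ℕ) (u : Fin (t + 1) → FreeGroup Y) (hist : Fin t → R)
    (hu0 : u 0 ≠ 1)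
    (hred : ∀ (i : ℕ) (hi : i + 1 < t),
      hist ⟨i + 1, hi⟩ ≠ inv (hist ⟨i, by omega⟩))
    (hstep :
      (∀ i : Fin t, u i.succ =
        FreeGroup.mk [c (hist i)] * u i.castSucc * (FreeGroup.mk [c (hist i)])⁻¹) ∨
      (∀ i : Fin t, u i.succ =
        (FreeGroup.mk [c (hist i)])⁻¹ * u i.castSucc * FreeGroup.mk [c (hist i)])) :
    ∃ (H1 H2 H3 : List R) (k : ℕ),
      List.ofFn hist = H1 ++ (List.replicate k H2).flatten ++ H3 ∧
      H2.length ≤ min (u 0).toWord.length (u (Fin.last t)).toWord.length ∧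
      2 * H1.length ≤ (u 0).toWord.length ∧
      2 * H3.length ≤ (u (Fin.last t)).toWord.length := by
  obtain ⟨c', hc', hinv', hstep'⟩ : ∃ c' : R → Y × Bool, c'.Injective ∧
      (∀ r, c' (inv r) = ((c' r).1, !(c' r).2)) ∧ ∀ i : Fin t, u i.succ =
        (FreeGroup.mk [c' (hist i)])⁻¹ * u i.castSucc * FreeGroup.mk [c' (hist i)] := by
    rcases hstep with h | h
    · refine ⟨c ∘ inv, SectorConjugation.injective_comp_inv hinj hinv, by simp [hinv], ?_⟩
      simpa [hinv, FreeGroup.inv_mk, FreeGroup.invRev] using h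
    · exact ⟨c, hinj, hinv, h⟩
  have hlast : u (Fin.last t) = (FreeGroup.mk ((List.ofFn hist).map c'))⁻¹ * u 0 *
      FreeGroup.mk ((List.ofFn hist).map c') := by
    rw [List.map_ofFn]
    exact SectorConjugation.eq_conj_mk_ofFn hstep'
  rw [hlast]
  exact SectorConjugation.exists_eq_append_pow_append_of_isReduced_map hc' hu0
    (SectorConjugation.isReduced_map_of_isChain hc' hinv' (List.isChain_ofFn.2 hred))
end

section
/- Let C: W_0 → … → W_t be a reduced computation of the S-machine LR(Y) with the standard base Q^{(1)} P Q^{(2)} such that W_0 ≡ q^{(1)} u p^{(1)} q^{(2)} and W_t ≡ q^{(1)} v p^{(2)} q^{(2)} for some words u, v. Then u ≡ v; |W_i|_Y = |W_0|_Y for every i = 0, …, t; t = 2k + 1 where k = |W_0|_Y; the Q^{(1)}P-sector is locked in the transition W_k → W_{k+1}; and the history H of C is a copy of the word ū ζ^{(12)} (ū')^{-1}, where ū is the mirror image of u and ū' is the corresponding copy of ū. In particular, W_0, W_t and H uniquely determine each other. -/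
namespace LR

/-- The rules of the `S`-machine `LR(Y)`: `z1 a = ζ⁽¹⁾(a)`, `z12 = ζ⁽¹²⁾` and
`z2 a = ζ⁽²⁾(a)`.  A signed rule `(r, ε) : LRRule Y × Bool` is the rule `r` if
`ε = true` and its inverse if `ε = false`. -/
inductive LRRule (Y : Type) : Type
  | z1 : Y → LRRule Y
  | z12 : LRRule Y
  | z2 : Y → LRRule Y

/-- A configuration of `LR(Y)` with the standard base `Q⁽¹⁾ P Q⁽²⁾`:
`st = false` means the running state letter is `p⁽¹⁾`, `st = true` means it is `p⁽²⁾`;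
`uL` is the tape word of the `Q⁽¹⁾P`-sector (a reduced word in `Y⁽¹⁾`, identified
with `Y`), and `uR` is the tape word of the `PQ⁽²⁾`-sector (a reduced word in `Y⁽²⁾`,
identified with `Y` via `a ↦ a'`). -/
structure Config (Y : Type) where
  st : Bool
  uL : FreeGroup Y
  uR : FreeGroup Y

variable {Y : Type}

/-- the `Y`-length `|W|_Y` of a configuration -/
def lenY [DecidableEq Y] (W : Config Y) : ℕ :=
  W.uL.toWord.length + W.uR.toWord.length

/-- One application of a (signed) rule of `LR(Y)`. -/
def Step (r : LRRule Y × Bool) (W W' : Config Y) : Prop :=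
  match r with
  | (LRRule.z1 a, true) => W.st = false ∧ W'.st = false ∧
      W'.uL = W.uL * (FreeGroup.of a)⁻¹ ∧ W'.uR = FreeGroup.of a * W.uR
  | (LRRule.z1 a, false) => W.st = false ∧ W'.st = false ∧
      W'.uL = W.uL * FreeGroup.of a ∧ W'.uR = (FreeGroup.of a)⁻¹ * W.uR
  | (LRRule.z12, true) => W.st = false ∧ W.uL = 1 ∧
      W'.st = true ∧ W'.uL = 1 ∧ W'.uR = W.uR
  | (LRRule.z12, false) => W.st = true ∧ W.uL = 1 ∧
      W'.st = false ∧ W'.uL = 1 ∧ W'.uR = W.uR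
  | (LRRule.z2 a, true) => W.st = true ∧ W'.st = true ∧
      W'.uL = W.uL * FreeGroup.of a ∧ W'.uR = (FreeGroup.of a)⁻¹ * W.uR
  | (LRRule.z2 a, false) => W.st = true ∧ W'.st = true ∧
      W'.uL = W.uL * (FreeGroup.of a)⁻¹ ∧ W'.uR = FreeGroup.of a * W.uR

end LR

/-!
In either state, every rule except `ζ⁽¹²⁾` multiplies the left tape word on the right by one
letter. The history of a reduced computation without `ζ⁽¹²⁾` is therefore a copy of a reduced
word, namely of `u₀⁻¹u₁` for the left tape words `u₀`, `u₁` at its ends. As `ζ⁽¹²⁾` requires the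
left tape word to be trivial, the rules between two of its applications would be a copy of a
reduced word equal to `1`, hence none at all, and the second application would cancel the first.
So the state changes at most once, and the history is determined by the left tape words at the
ends. Counting its letters before and after an intermediate configuration, where `uL * uR` has
the same value, gives the `Y`-length of that configuration.
-/

namespace LR

open FreeGroup

/-- The signed rule that, in the state `s`, multiplies the left tape word by the letter `l` on the
right. In the state `p⁽¹⁾` this is `ζ⁽¹⁾(a)` for `l = a⁻¹`, hence the change of sign. -/
def shiftRule : Bool → Y × Bool → LRRule Y × Bool
  | false, (a, e) => (.z1 a, !e)
  | true, (a, e) => (.z2 a, e)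

/-- The signed rule leaving the state `s`: `ζ⁽¹²⁾` from `p⁽¹⁾` and its inverse from `p⁽²⁾`. -/
def switchRule (s : Bool) : LRRule Y × Bool :=
  (.z12, !s)

/-- Computations of `LR(Y)` from one configuration to another with a given history, not necessarily
reduced. As signed rules are letters over the alphabet `LRRule Y`, the computation is reduced when
its history satisfies `FreeGroup.IsReduced`. -/
inductive IsComputation : Config Y → List (LRRule Y × Bool) → Config Y → Prop
  | nil (W : Config Y) : IsComputation W [] W
  | snoc {W V W' : Config Y} {H : List (LRRule Y × Bool)} {r : LRRule Y × Bool} :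
      IsComputation W H V → Step r V W' → IsComputation W (H ++ [r]) W'

section FreeGroup

variable {α : Type*}

theorem isReduced_iff_isChain_ne_inv {L : List (α × Bool)} :
    IsReduced L ↔ L.IsChain fun a b ↦ b ≠ (a.1, !a.2) := by
  have same_sign_iff (a b : α × Bool) : (a.1 = b.1 → a.2 = b.2) ↔ b ≠ (a.1, !a.2) := by
    obtain ⟨x, d⟩ := a
    obtain ⟨y, e⟩ := b
    cases d <;> cases e <;> simp [eq_comm]
  simp only [FreeGroup.IsReduced, same_sign_iff]

theorem toWord_mul_mk_of_isReduced [DecidableEq α] {x : FreeGroup α} {L : List (α × Bool)}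
    (h : IsReduced (x.toWord ++ L)) : (x * mk L).toWord = x.toWord ++ L := by
  rw [← h.reduce_eq, ← toWord_mk, ← mul_mk, mk_toWord]

end FreeGroup

theorem isReduced_of_map_shiftRule {s : Bool} {w : List (Y × Bool)}
    (h : IsReduced (w.map (shiftRule s))) : IsReduced w := by
  refine List.isChain_of_isChain_map _ (fun a b hab h₁ ↦ ?_) h
  cases s <;> simpa [shiftRule, h₁] using hab

theorem map_shiftRule_toWord_mul_mk [DecidableEq Y] {s : Bool} {A : List (LRRule Y × Bool)}
    {x : FreeGroup Y} {l : Y × Bool}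
    (h : IsReduced (A ++ x.toWord.map (shiftRule s) ++ [shiftRule s l])) :
    (x * mk [l]).toWord.map (shiftRule s) = x.toWord.map (shiftRule s) ++ [shiftRule s l] := by
  have hred : IsReduced (x.toWord ++ [l]) := by
    refine isReduced_of_map_shiftRule (s := s) (h.infix (List.IsSuffix.isInfix ⟨A, ?_⟩))
    rw [List.map_append, List.map_singleton, List.append_assoc]
  rw [toWord_mul_mk_of_isReduced hred, List.map_append, List.map_singleton]

theorem not_isReduced_switchRule_switchRule (s : Bool) :
    ¬ IsReduced ([switchRule s, switchRule (!s)] : List (LRRule Y × Bool)) := by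
  simp [switchRule, isReduced_cons_cons]

theorem map_shiftRule_false_invRev (w : List (Y × Bool)) :
    (invRev w).map (shiftRule false) = w.reverse.map fun l ↦ (LRRule.z1 l.1, l.2) := by
  simp [invRev, shiftRule, Function.comp_def]

theorem Step.shift_or_switch {r : LRRule Y × Bool} {W W' : Config Y} (h : Step r W W') :
    (∃ l, r = shiftRule W.st l ∧ W'.st = W.st ∧ W'.uL = W.uL * mk [l] ∧
      W'.uR = (mk [l])⁻¹ * W.uR) ∨
    (r = switchRule W.st ∧ W'.st = !W.st ∧ W.uL = 1 ∧ W'.uL = 1 ∧ W'.uR = W.uR) := by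
  match r, h with
  | (.z1 a, e), h =>
    refine .inl ⟨(a, !e), ?_⟩
    cases e <;> obtain ⟨hst, hst', hL, hR⟩ := h <;>
      exact ⟨by rw [hst]; rfl, hst'.trans hst.symm, hL, hR⟩
  | (.z2 a, e), h =>
    refine .inl ⟨(a, e), ?_⟩
    cases e <;> obtain ⟨hst, hst', hL, hR⟩ := h <;>
      exact ⟨by rw [hst]; rfl, hst'.trans hst.symm, hL, hR⟩
  | (.z12, e), h =>
    cases e <;> obtain ⟨hst, hL, hst', hL', hR⟩ := h <;> simp [switchRule, *]

theorem Step.uL_mul_uR {r : LRRule Y × Bool} {W W' : Config Y} (h : Step r W W') :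
    W'.uL * W'.uR = W.uL * W.uR := by
  obtain ⟨l, -, -, hL, hR⟩ | ⟨-, -, hL, hL', hR⟩ := h.shift_or_switch
  · rw [hL, hR, mul_assoc, mul_inv_cancel_left]
  · rw [hL, hL', hR]

theorem lenY_eq_norm_add_norm [DecidableEq Y] (W : Config Y) :
    lenY W = W.uL.norm + W.uR.norm :=
  rfl

namespace IsComputation

variable {W V W' : Config Y} {H H₁ H₂ : List (LRRule Y × Bool)}

theorem append (h₁ : IsComputation W H₁ V) (h₂ : IsComputation V H₂ W') :
    IsComputation W (H₁ ++ H₂) W' := by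
  induction h₂ with
  | nil => simpa only [List.append_nil] using h₁
  | snoc _ hs ih => simpa only [List.append_assoc] using ih.snoc hs

theorem uL_mul_uR (h : IsComputation W H W') : W'.uL * W'.uR = W.uL * W.uR := by
  induction h with
  | nil => rfl
  | snoc _ hs ih => exact hs.uL_mul_uR.trans ih

theorem uL_eq_of_uR_eq_one (h : IsComputation W H W') (hW : W.uR = 1) (hW' : W'.uR = 1) :
    W'.uL = W.uL := by
  simpa only [hW, hW', mul_one] using h.uL_mul_uR

theorem take_drop_ofFn {t : ℕ} {W : Fin (t + 1) → Config Y} {hist : Fin t → LRRule Y × Bool}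
    (hstep : ∀ i : Fin t, Step (hist i) (W i.castSucc) (W i.succ)) (i n : ℕ) (h : i + n < t + 1) :
    IsComputation (W ⟨i, by omega⟩) (((List.ofFn hist).drop i).take n) (W ⟨i + n, h⟩) := by
  induction n with
  | zero => exact .nil _
  | succ n ih =>
    rw [List.take_succ_eq_append_getElem (by grind), List.getElem_drop, List.getElem_ofFn]
    exact (ih (by omega)).snoc (hstep ⟨i + n, by omega⟩)

variable [DecidableEq Y]

theorem st_and_history_eq (h : IsComputation W H W') (hH : IsReduced H) :
    (W'.st = W.st ∧ H = (W.uL⁻¹ * W'.uL).toWord.map (shiftRule W.st)) ∨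
    (W'.st = !W.st ∧ H = W.uL⁻¹.toWord.map (shiftRule W.st) ++ [switchRule W.st] ++
      W'.uL.toWord.map (shiftRule (!W.st))) := by
  induction h with
  | nil => simp
  | @snoc V W' H r _ hs ih =>
    have hH' := hH.infix (List.prefix_append _ _).isInfix
    obtain ⟨hst, rfl⟩ | ⟨hst, rfl⟩ := ih hH' <;>
      obtain ⟨l, rfl, hst', hL, -⟩ | ⟨rfl, hst', hL, hL', -⟩ := hs.shift_or_switch <;>
      rw [hst] at hH hst'
    case inl.inl =>
      rw [hst, hL, ← mul_assoc, map_shiftRule_toWord_mul_mk (A := []) hH]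
      exact .inl ⟨hst', rfl⟩
    case inl.inr =>
      exact .inr ⟨hst', by simp [hst, hL, hL']⟩
    case inr.inl =>
      rw [hst, hL, map_shiftRule_toWord_mul_mk hH, List.append_assoc _ _ [_]]
      exact .inr ⟨hst', rfl⟩
    case inr.inr =>
      rw [hL, toWord_one, List.map_nil, List.append_nil, List.append_assoc] at hH
      exact (not_isReduced_switchRule_switchRule W.st
        (hH.infix (List.suffix_append _ _).isInfix)).elim

theorem history_eq_of_st_eq (h : IsComputation W H W') (hH : IsReduced H) (hst : W'.st = W.st) :
    H = (W.uL⁻¹ * W'.uL).toWord.map (shiftRule W.st) := by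
  simpa [hst] using h.st_and_history_eq hH

theorem history_eq_of_st_ne (h : IsComputation W H W') (hH : IsReduced H) (hst : W'.st ≠ W.st) :
    H = W.uL⁻¹.toWord.map (shiftRule W.st) ++ [switchRule W.st] ++
      W'.uL.toWord.map (shiftRule (!W.st)) :=
  (h.st_and_history_eq hH).elim (fun h ↦ absurd h.1 hst) And.right

theorem length_history_of_st_eq (h : IsComputation W H W') (hH : IsReduced H) (hst : W'.st = W.st) :
    H.length = (W.uL⁻¹ * W'.uL).norm := by
  rw [h.history_eq_of_st_eq hH hst, List.length_map, FreeGroup.norm]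

theorem length_history_of_st_ne (h : IsComputation W H W') (hH : IsReduced H) (hst : W'.st ≠ W.st) :
    H.length = W.uL.norm + 1 + W'.uL.norm := by
  rw [h.history_eq_of_st_ne hH hst, ← norm_inv_eq (x := W.uL)]
  simp only [List.length_append, List.length_map, List.length_singleton, FreeGroup.norm]

theorem lenY_eq_of_append (h₁ : IsComputation W H₁ V) (h₂ : IsComputation V H₂ W')
    (hH : IsReduced (H₁ ++ H₂)) (hst : W'.st ≠ W.st) (hW : W.uR = 1) (hW' : W'.uR = 1) :
    lenY V = lenY W := by
  have hH₁ : IsReduced H₁ := hH.infix (List.prefix_append _ _).isInfix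
  have hH₂ : IsReduced H₂ := hH.infix (List.suffix_append _ _).isInfix
  have length_total := (h₁.append h₂).length_history_of_st_ne hH hst
  rw [List.length_append] at length_total
  have norm_ends : W'.uL.norm = W.uL.norm :=
    congrArg FreeGroup.norm ((h₁.append h₂).uL_eq_of_uR_eq_one hW hW')
  rw [lenY_eq_norm_add_norm, lenY_eq_norm_add_norm, hW, FreeGroup.norm_one, add_zero]
  by_cases hV : V.st = W.st
  · have norm_uR : (W.uL⁻¹ * V.uL).norm = V.uR.norm := by
      have hprod : V.uL * V.uR = W.uL := by simpa only [hW, mul_one] using h₁.uL_mul_uR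
      rw [← hprod, mul_inv_rev, inv_mul_cancel_right, norm_inv_eq]
    have length₁ := h₁.length_history_of_st_eq hH₁ hV
    have length₂ := h₂.length_history_of_st_ne hH₂ (hV ▸ hst)
    omega
  · have norm_uR : (V.uL⁻¹ * W'.uL).norm = V.uR.norm := by
      have hprod : W'.uL = V.uL * V.uR := by simpa only [hW', mul_one] using h₂.uL_mul_uR
      rw [hprod, inv_mul_cancel_left]
    have length₁ := h₁.length_history_of_st_ne hH₁ hV
    have hV' : W'.st = V.st := (Bool.eq_not.2 hst).trans (Bool.eq_not.2 hV).symm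
    have length₂ := h₂.length_history_of_st_eq hH₂ hV'
    omega

end IsComputation

end LR

open LR in
/-- Lemma `prim` (3): in a reduced computation of `LR(Y)` with the standard base starting
with `W₀ ≡ q⁽¹⁾ u p⁽¹⁾ q⁽²⁾` and ending with `W_t ≡ q⁽¹⁾ v p⁽²⁾ q⁽²⁾` one has `u ≡ v`,
all configurations have `Y`-length `|W₀|_Y`, `t = 2k + 1` with `k = |W₀|_Y`, the
`Q⁽¹⁾P`-sector is locked in the transition `W_k → W_{k+1}` (the rule applied there is
`ζ⁽¹²⁾`), and the history is a copy of `ū ζ⁽¹²⁾ (ū')⁻¹`, where `ū` is the mirror image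
of `u`; so `W₀`, `W_t` and `H` uniquely determine each other. -/
theorem lr_prim_locking {Y : Type} [DecidableEq Y]
    (t : ℕ) (W : Fin (t + 1) → Config Y) (hist : Fin t → LRRule Y × Bool)
    (hstep : ∀ i : Fin t, Step (hist i) (W i.castSucc) (W i.succ))
    (hred : ∀ (i : ℕ) (hi : i + 1 < t),
      hist ⟨i + 1, hi⟩ ≠ ((hist ⟨i, by omega⟩).1, !(hist ⟨i, by omega⟩).2))
    (h0 : (W 0).st = false ∧ (W 0).uR = 1)
    (ht : (W (Fin.last t)).st = true ∧ (W (Fin.last t)).uR = 1) :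
    (W (Fin.last t)).uL = (W 0).uL ∧
    (∀ i : Fin (t + 1), lenY (W i) = lenY (W 0)) ∧
    t = 2 * (W 0).uL.toWord.length + 1 ∧
    (∀ hk : (W 0).uL.toWord.length < t,
      hist ⟨(W 0).uL.toWord.length, hk⟩ = (LRRule.z12, true)) ∧
    List.ofFn hist =
      ((W 0).uL.toWord.reverse.map fun l => (LRRule.z1 l.1, l.2)) ++
        [(LRRule.z12, true)] ++
        ((W 0).uL.toWord.map fun l => (LRRule.z2 l.1, l.2)) := by
  have hH : FreeGroup.IsReduced (List.ofFn hist) :=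
    isReduced_iff_isChain_ne_inv.2 (List.isChain_ofFn.2 hred)
  have hst : (W (Fin.last t)).st ≠ (W 0).st := by simp [h0.1, ht.1]
  have before (i : Fin (t + 1)) : IsComputation (W 0) ((List.ofFn hist).take i) (W i) := by
    simpa using IsComputation.take_drop_ofFn hstep 0 i (by omega)
  have after (i : Fin (t + 1)) :
      IsComputation (W i) ((List.ofFn hist).drop i) (W (Fin.last t)) := by
    simpa [Fin.last, Nat.add_sub_of_le i.is_le, List.take_of_length_le] using
      IsComputation.take_drop_ofFn hstep i (t - i) (by omega)
  have whole : IsComputation (W 0) (List.ofFn hist) (W (Fin.last t)) := after 0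
  have huL : (W (Fin.last t)).uL = (W 0).uL := whole.uL_eq_of_uR_eq_one h0.2 ht.2
  have history_eq := whole.history_eq_of_st_ne hH hst
  rw [h0.1, huL, FreeGroup.toWord_inv, map_shiftRule_false_invRev] at history_eq
  refine ⟨huL, fun i ↦ ?_, ?_, fun hk ↦ ?_, history_eq⟩
  · exact (before i).lenY_eq_of_append (after i) (by rwa [List.take_append_drop]) hst h0.2 ht.2
  · simpa [huL, FreeGroup.norm, two_mul, add_right_comm] using whole.length_history_of_st_ne hH hst
  · rw [← List.getElem_ofFn (f := hist) (by simpa using hk)]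
    simp [history_eq, switchRule]
end

section
/- Let F be a free group and let v_l, v_r, u_0 ∈ F. For j ≥ 0 set u_j = v_l^j u_0 v_r^j. Then for every k ≥ 0 and every j with 0 ≤ j ≤ k, the length of the reduced word representing u_j is at most ||v_l|| + ||v_r|| + ||u_0|| + ||u_k||, where ||g|| denotes the length of the reduced word representing g in the free generators. -/
/-!
The Cayley graph of a free group is a tree, so its word metric satisfies the four-point condition.
Write `v_l = c * b * c⁻¹` and `v_r = d * e * d⁻¹` with `b` and `e` cyclically reduced, and put
`m = c⁻¹ * u_0 * d`. The points `b⁻¹ ^ n` and `m * e ^ n` move at constant speed along two geodesics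
of the tree, and the distance between them, `‖b ^ n * m * e ^ n‖`, is therefore convex in `n`; hence
its value at `j` is at most the larger of its values at `0` and `k`. Conjugating back replaces
`b ^ n * m * e ^ n` by `u_n` at the cost of `‖c‖ + ‖d‖`, which is paid at both ends and is at most
half of `‖v_l‖ + ‖v_r‖`.
-/

section DiscreteConvexity

variable {R : Type*} [AddCommGroup R] [LinearOrder R] [IsOrderedAddMonoid R]

theorem le_max_of_monotone_sub {f : ℕ → R} (hf : Monotone fun n ↦ f (n + 1) - f n) {i j k : ℕ}
    (hij : i ≤ j) (hjk : j ≤ k) : f j ≤ max (f i) (f k) := by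
  rcases le_total (f (j + 1) - f j) 0 with hneg | hpos
  · have anti : AntitoneOn f (Set.Iic j) :=
      antitoneOn_of_add_one_le Set.ordConnected_Iic fun n _ hn _ ↦
        sub_nonpos.mp ((hf hn).trans hneg)
    exact le_max_of_le_left (anti hij Set.self_mem_Iic hij)
  · have mono : MonotoneOn f (Set.Ici j) :=
      monotoneOn_nat_Ici_of_le_succ fun n hn ↦ sub_nonneg.mp (hpos.trans (hf hn))
    exact le_max_of_le_right (mono Set.self_mem_Ici hjk hjk)

end DiscreteConvexity

section ZeroHyperbolic

/-- The four-point condition: the space is `0`-hyperbolic in the sense of Gromov, i.e. it embeds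
isometrically in a real tree. -/
def IsZeroHyperbolic (X : Type*) [PseudoMetricSpace X] : Prop :=
  ∀ x y z w : X, dist x y + dist z w ≤ max (dist x z + dist y w) (dist x w + dist y z)

/-- `m` is a metric midpoint of `x` and `y`. It need not exist or be unique, in contrast to the
affine `midpoint`. -/
def IsMetricMidpoint {X : Type*} [PseudoMetricSpace X] (x m y : X) : Prop :=
  dist x m = dist x y / 2 ∧ dist m y = dist x y / 2

namespace IsZeroHyperbolic

variable {X : Type*} [PseudoMetricSpace X]

theorem dist_midpoint_add_le (hX : IsZeroHyperbolic X) {x m y : X} (hm : IsMetricMidpoint x m y)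
    (w : X) : dist m w + dist x y / 2 ≤ max (dist x w) (dist y w) := by
  have h := hX m w x y
  rw [dist_comm m x, hm.1, hm.2, dist_comm w x, dist_comm w y, max_add_add_left, max_comm] at h
  linarith

theorem dist_midpoints_add_le (hX : IsZeroHyperbolic X) {x m y x' m' y' : X}
    (hm : IsMetricMidpoint x m y) (hm' : IsMetricMidpoint x' m' y') :
    dist m m' + dist x y / 2 + dist x' y' / 2 ≤
      max (max (dist x x') (dist x y')) (max (dist y x') (dist y y')) := by
  have hx := hX.dist_midpoint_add_le hm' x
  have hy := hX.dist_midpoint_add_le hm' y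
  simp only [dist_comm _ x, dist_comm _ y] at hx hy
  calc dist m m' + dist x y / 2 + dist x' y' / 2
      ≤ max (dist x m') (dist y m') + dist x' y' / 2 := by
        gcongr
        exact hX.dist_midpoint_add_le hm m'
    _ = max (dist x m' + dist x' y' / 2) (dist y m' + dist x' y' / 2) :=
        (max_add_add_right _ _ _).symm
    _ ≤ _ := max_le_max hx hy

theorem two_mul_dist_midpoints_le (hX : IsZeroHyperbolic X) {x m y x' m' y' : X}
    (hm : IsMetricMidpoint x m y) (hm' : IsMetricMidpoint x' m' y') :
    2 * dist m m' ≤ dist x x' + dist y y' := by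
  have hcorner := hX.dist_midpoints_add_le hm hm'
  have hxx' := dist_triangle4 m x x' m'
  have hyy' := dist_triangle4 m y y' m'
  have hxy' := dist_triangle x x' y'
  have hxy'_via_y := dist_triangle x y y'
  have hyx' := dist_triangle y x x'
  have hyx'_via_y' := dist_triangle y y' x'
  rw [dist_comm m x, hm.1, hm'.1] at hxx'
  rw [hm.2, dist_comm y' m', hm'.2] at hyy'
  rw [dist_comm y x] at hyx'
  rw [dist_comm y' x'] at hyx'_via_y'
  simp only [le_max_iff] at hcorner
  -- A mixed corner such as `dist x y'` is bounded by going round the quadrilateral either way;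
  -- the claim is the sum of these two bounds.
  rcases hcorner with (h | h) | (h | h) <;> linarith

theorem dist_le_max_of_isMetricMidpoint (hX : IsZeroHyperbolic X) {p q : ℕ → X}
    (hp : ∀ n, IsMetricMidpoint (p n) (p (n + 1)) (p (n + 2)))
    (hq : ∀ n, IsMetricMidpoint (q n) (q (n + 1)) (q (n + 2))) {i j k : ℕ}
    (hij : i ≤ j) (hjk : j ≤ k) :
    dist (p j) (q j) ≤ max (dist (p i) (q i)) (dist (p k) (q k)) := by
  refine le_max_of_monotone_sub (f := fun n ↦ dist (p n) (q n))
    (monotone_nat_of_le_succ fun n ↦ ?_) hij hjk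
  have := hX.two_mul_dist_midpoints_le (hp n) (hq n)
  linarith

end IsZeroHyperbolic

end ZeroHyperbolic

section SeminormedGroup

variable {G : Type*} [SeminormedGroup G]

theorem isMetricMidpoint_mul_pow {b : G} (hb : ‖b ^ 2‖ = 2 * ‖b‖) (g : G) (n : ℕ) :
    IsMetricMidpoint (g * b ^ n) (g * b ^ (n + 1)) (g * b ^ (n + 2)) := by
  have hstep : ∀ n, dist (g * b ^ n) (g * b ^ (n + 1)) = ‖b‖ := fun n ↦ by
    rw [dist_mul_left, dist_eq_norm_inv_mul, pow_succ, inv_mul_cancel_left]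
  have htwo : dist (g * b ^ n) (g * b ^ (n + 2)) = 2 * ‖b‖ := by
    rw [dist_mul_left, dist_eq_norm_inv_mul, pow_add, inv_mul_cancel_left, hb]
  constructor
  · rw [hstep, htwo, mul_div_cancel_left₀ _ two_ne_zero]
  · rw [hstep, htwo, mul_div_cancel_left₀ _ two_ne_zero]

theorem norm_pow_mul_mul_pow_le_max (hG : IsZeroHyperbolic G) {b e : G}
    (hb : ‖b ^ 2‖ = 2 * ‖b‖) (he : ‖e ^ 2‖ = 2 * ‖e‖) (m : G) {j k : ℕ} (hjk : j ≤ k) :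
    ‖b ^ j * m * e ^ j‖ ≤ max ‖m‖ ‖b ^ k * m * e ^ k‖ := by
  have hb_inv : ‖b⁻¹ ^ 2‖ = 2 * ‖b⁻¹‖ := by rw [inv_pow, norm_inv', norm_inv', hb]
  have hdist : ∀ n, dist (1 * b⁻¹ ^ n) (m * e ^ n) = ‖b ^ n * m * e ^ n‖ := fun n ↦ by
    rw [dist_eq_norm_inv_mul, one_mul, inv_pow, inv_inv, mul_assoc]
  have hzero : ‖b ^ 0 * m * e ^ 0‖ = ‖m‖ := by rw [pow_zero, pow_zero, one_mul, mul_one]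
  rw [← hzero, ← hdist, ← hdist, ← hdist]
  exact hG.dist_le_max_of_isMetricMidpoint (isMetricMidpoint_mul_pow hb_inv 1)
    (isMetricMidpoint_mul_pow he m) (Nat.zero_le j) hjk

theorem norm_mul_mul_inv_le (c w d : G) : ‖c * w * d⁻¹‖ ≤ ‖c‖ + ‖w‖ + ‖d‖ := by
  simpa only [norm_inv'] using norm_mul₃_le' (a := c) (b := w) (c := d⁻¹)

theorem norm_conj_pow_mul_mul_conj_pow_le (hG : IsZeroHyperbolic G) {b e : G}
    (hb : ‖b ^ 2‖ = 2 * ‖b‖) (he : ‖e ^ 2‖ = 2 * ‖e‖) (c d u : G) {j k : ℕ} (hjk : j ≤ k) :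
    ‖(c * b * c⁻¹) ^ j * u * (d * e * d⁻¹) ^ j‖ ≤
      2 * ‖c‖ + 2 * ‖d‖ + max ‖u‖ ‖(c * b * c⁻¹) ^ k * u * (d * e * d⁻¹) ^ k‖ := by
  set U : ℕ → G := fun n ↦ (c * b * c⁻¹) ^ n * u * (d * e * d⁻¹) ^ n with hU
  set W : ℕ → G := fun n ↦ b ^ n * (c⁻¹ * u * d) * e ^ n with hW
  have hUW : ∀ n, U n = c * W n * d⁻¹ := fun n ↦ by
    simp only [hU, hW, conj_pow]
    group
  have hW_le : ∀ n, ‖W n‖ ≤ ‖c‖ + ‖d‖ + ‖U n‖ := fun n ↦ by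
    have h := norm_mul_mul_inv_le c⁻¹ (U n) d⁻¹
    rw [show c⁻¹ * U n * d⁻¹⁻¹ = W n by rw [hUW]; group, norm_inv', norm_inv'] at h
    linarith
  have hU0 : U 0 = u := by simp [hU]
  have hW0 : W 0 = c⁻¹ * u * d := by simp [hW]
  calc ‖U j‖ ≤ ‖c‖ + ‖W j‖ + ‖d‖ := hUW j ▸ norm_mul_mul_inv_le c (W j) d
    _ ≤ ‖c‖ + max ‖W 0‖ ‖W k‖ + ‖d‖ := by
      gcongr
      exact hW0 ▸ norm_pow_mul_mul_pow_le_max hG hb he (c⁻¹ * u * d) hjk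
    _ ≤ ‖c‖ + (‖c‖ + ‖d‖ + max ‖U 0‖ ‖U k‖) + ‖d‖ := by
      gcongr
      rw [← max_add_add_left]
      exact max_le_max (hW_le 0) (hW_le k)
    _ = 2 * ‖c‖ + 2 * ‖d‖ + max ‖u‖ ‖U k‖ := by rw [hU0]; ring

end SeminormedGroup

section CommonPrefix

variable {β : Type*} [DecidableEq β]

/-- Length of the longest common prefix of two lists. On reduced words it is the Gromov product of
the corresponding elements of the free group, based at `1`. -/
def commonPrefixLength : List β → List β → ℕ
  | a :: x, b :: y => if a = b then commonPrefixLength x y + 1 else 0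
  | _, _ => 0

theorem min_commonPrefixLength_le (x y z : List β) :
    min (commonPrefixLength x z) (commonPrefixLength y z) ≤ commonPrefixLength x y := by
  induction x generalizing y z with
  | nil => simp [commonPrefixLength]
  | cons a x ih =>
    rcases y with _ | ⟨b, y⟩ <;> rcases z with _ | ⟨c, z⟩ <;> simp only [commonPrefixLength]
    all_goals grind

end CommonPrefix

section FreeGroup

open FreeGroup

variable {α : Type*}

theorem isReduced_invRev_append {a b : α × Bool} {x y : List (α × Bool)}
    (hx : IsReduced (a :: x)) (hy : IsReduced (b :: y)) (hab : a ≠ b) :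
    IsReduced (invRev (a :: x) ++ b :: y) := by
  classical
  have hx_inv : IsReduced (invRev (a :: x)) := by
    rw [isReduced_iff_reduce_eq, reduce_invRev, hx.reduce_eq]
  refine List.IsChain.append hx_inv hy fun p hp q hq ↦ ?_
  obtain rfl : (a.1, !a.2) = p := by simpa [invRev] using hp
  obtain rfl : b = q := by simpa using hq
  intro hletter
  exact (Bool.eq_not_of_ne fun hsign ↦ hab (Prod.ext hletter hsign.symm)).symm

variable [DecidableEq α]

theorem norm_mk_of_isReduced {x : List (α × Bool)} (hx : IsReduced x) :
    (FreeGroup.mk x).norm = x.length := by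
  rw [FreeGroup.norm, toWord_mk, hx.reduce_eq]

theorem norm_inv_mk_mul_mk_add {x y : List (α × Bool)} (hx : IsReduced x) (hy : IsReduced y) :
    ((FreeGroup.mk x)⁻¹ * FreeGroup.mk y).norm + 2 * commonPrefixLength x y =
      x.length + y.length := by
  induction x generalizing y with
  | nil => simp [commonPrefixLength, ← one_eq_mk, norm_mk_of_isReduced hy]
  | cons a x ih =>
    rcases y with _ | ⟨b, y⟩
    · simp [commonPrefixLength, ← one_eq_mk, -inv_mk, norm_mk_of_isReduced hx]
    by_cases hab : a = b
    · subst hab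
      have hcancel : (FreeGroup.mk (a :: x))⁻¹ * FreeGroup.mk (a :: y) =
          (FreeGroup.mk x)⁻¹ * FreeGroup.mk y := by
        rw [← List.singleton_append, ← List.singleton_append (l := y), ← mul_mk, ← mul_mk]
        group
      have h := ih (hx.infix (List.suffix_cons a x).isInfix)
        (hy.infix (List.suffix_cons a y).isInfix)
      simp only [hcancel, commonPrefixLength, if_true, List.length_cons]
      omega
    · rw [inv_mk, mul_mk, norm_mk_of_isReduced (isReduced_invRev_append hx hy hab)]
      simp [commonPrefixLength, hab]

theorem norm_inv_mul_add_commonPrefixLength (x y : FreeGroup α) :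
    (x⁻¹ * y).norm + 2 * commonPrefixLength x.toWord y.toWord = x.norm + y.norm := by
  simpa only [mk_toWord, FreeGroup.norm] using
    norm_inv_mk_mul_mk_add (isReduced_toWord (x := x)) (isReduced_toWord (x := y))

theorem norm_inv_mul_add_norm_le (x y z : FreeGroup α) :
    (x⁻¹ * y).norm + z.norm ≤ max ((x⁻¹ * z).norm + y.norm) ((y⁻¹ * z).norm + x.norm) := by
  have hxy := norm_inv_mul_add_commonPrefixLength x y
  have hxz := norm_inv_mul_add_commonPrefixLength x z
  have hyz := norm_inv_mul_add_commonPrefixLength y z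
  have hmin := min_commonPrefixLength_le x.toWord y.toWord z.toWord
  omega

/-- The free group with the word norm; its left-invariant distance `‖x⁻¹ * y‖` is the path metric
of the Cayley tree. -/
noncomputable abbrev wordNormedGroup (α : Type*) [DecidableEq α] : NormedGroup (FreeGroup α) :=
  GroupNorm.toNormedGroup
    { toFun := fun x ↦ x.norm
      map_one' := by simp
      mul_le' := fun x y ↦ mod_cast norm_mul_le x y
      inv' := fun x ↦ by simp
      eq_one_of_map_eq_zero' := fun x hx ↦ by simpa using hx }

attribute [local instance] wordNormedGroup

theorem norm_eq_length_toWord (x : FreeGroup α) : ‖x‖ = x.toWord.length := rfl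

theorem isZeroHyperbolic_freeGroup : IsZeroHyperbolic (FreeGroup α) := by
  intro x y z w
  have h := norm_inv_mul_add_norm_le (w⁻¹ * x) (w⁻¹ * y) (w⁻¹ * z)
  simp only [mul_inv_rev, inv_inv, mul_assoc, mul_inv_cancel_left] at h
  rw [dist_comm z w, dist_comm y w, dist_comm x w, add_comm (dist w x)]
  simp only [dist_eq_norm_inv_mul, norm_eq_length_toWord]
  exact_mod_cast h

theorem norm_sq_mk_of_isCyclicallyReduced {x : List (α × Bool)} (hx : IsCyclicallyReduced x) :
    ‖FreeGroup.mk x ^ 2‖ = 2 * ‖FreeGroup.mk x‖ := by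
  rw [pow_mk, norm_eq_length_toWord, norm_eq_length_toWord, toWord_mk, toWord_mk,
    (hx.flatten_replicate 2).isReduced.reduce_eq, hx.isReduced.reduce_eq]
  simp [two_mul]

theorem exists_eq_conj_norm_sq (v : FreeGroup α) :
    ∃ c b : FreeGroup α, v = c * b * c⁻¹ ∧ ‖b ^ 2‖ = 2 * ‖b‖ ∧ 2 * ‖c‖ ≤ ‖v‖ := by
  set c := reduceCyclically.conjugator v.toWord
  set b := reduceCyclically v.toWord
  have hword : c ++ b ++ invRev c = v.toWord :=
    reduceCyclically.conj_conjugator_reduceCyclically v.toWord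
  refine ⟨FreeGroup.mk c, FreeGroup.mk b, ?_, ?_, ?_⟩
  · rw [inv_mk, mul_mk, mul_mk, hword, mk_toWord]
  · exact norm_sq_mk_of_isCyclicallyReduced
      (reduceCyclically.isCyclicallyReduced isReduced_toWord)
  · have hlength := congrArg List.length hword
    have hc : (FreeGroup.mk c).toWord.length ≤ c.length := norm_mk_le
    simp only [List.length_append, invRev_length] at hlength
    simp only [norm_eq_length_toWord]
    exact_mod_cast (by omega : 2 * (FreeGroup.mk c).toWord.length ≤ v.toWord.length)

theorem freeGroup_length_conj_power_le_general (vl vr u0 : FreeGroup α) {j k : ℕ} (hjk : j ≤ k) :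
    (vl ^ j * u0 * vr ^ j).toWord.length ≤
      vl.toWord.length + vr.toWord.length +
        max u0.toWord.length (vl ^ k * u0 * vr ^ k).toWord.length := by
  obtain ⟨c, b, hvl, hb, hc⟩ := exists_eq_conj_norm_sq vl
  obtain ⟨d, e, hvr, he, hd⟩ := exists_eq_conj_norm_sq vr
  have h : ‖vl ^ j * u0 * vr ^ j‖ ≤ ‖vl‖ + ‖vr‖ + max ‖u0‖ ‖vl ^ k * u0 * vr ^ k‖ := by
    have hconj := norm_conj_pow_mul_mul_conj_pow_le isZeroHyperbolic_freeGroup hb he c d u0 hjk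
    rw [← hvl, ← hvr] at hconj
    linarith
  simp only [norm_eq_length_toWord] at h
  exact_mod_cast h

end FreeGroup

/-- OS04, Lemma 8.1: if `u_j = v_l^j * u_0 * v_r^j` in a free group, then for `0 ≤ j ≤ k`
the length of the reduced word representing `u_j` is at most
`‖v_l‖ + ‖v_r‖ + ‖u_0‖ + ‖u_k‖`. -/
theorem freeGroup_length_conj_power_le {α : Type} [DecidableEq α]
    (vl vr u0 : FreeGroup α) (k j : ℕ) (hjk : j ≤ k) :
    (vl ^ j * u0 * vr ^ j).toWord.length ≤
      vl.toWord.length + vr.toWord.length + u0.toWord.length +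
        (vl ^ k * u0 * vr ^ k).toWord.length := by
  have h := freeGroup_length_conj_power_le_general vl vr u0 hjk
  omega
end
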